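/- (Lemma 1(ii)) Under the balanced-design assumption, there exists a constant C depending only on δ such that Σ_{i,j,k} A_ij² A_ik² ≤ C K_Z; consequently (1/K_Z²) Σ_{i,j,k} A_ij² A_ik² → 0 as K_Z → ∞. -/

import Mathlib

open Matrix Finset

/-- The residual-maker (annihilator) projection `M_W = I - W (W'W)⁻¹ W'`. -/
noncomputable def annihilator {N KW : ℕ} (W : Matrix (Fin N) (Fin KW) ℝ) :
    Matrix (Fin N) (Fin N) ℝ :=
  1 - W * (Wᵀ * W)⁻¹ * Wᵀ

/-- The balanced-design assumption for the matrices `W`, `P⊥`, the vector `θ` and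
the constant `δ`: `W` has full column rank, `P⊥` is a symmetric idempotent matrix of rank
`K_Z` with `M_W P⊥ = P⊥ M_W = P⊥`, `θ` solves `∑_j (M_W)_ij² θ_j = (P⊥)_ii` with `θ_i ≥ 0`,
`min_i (M_W)_ii > 1/2`, and `(P⊥)_ii/(M_W)_ii² ≤ δ` for all `i`. -/
structure BalancedDesign {N KW : ℕ} (KZ : ℕ) (W : Matrix (Fin N) (Fin KW) ℝ)
    (Pperp : Matrix (Fin N) (Fin N) ℝ) (θ : Fin N → ℝ) (δ : ℝ) : Prop where
  hWrank : W.rank = KW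
  hPsymm : Pperp.IsSymm
  hPidem : Pperp * Pperp = Pperp
  hPrank : Pperp.rank = KZ
  hMP : annihilator W * Pperp = Pperp
  hPM : Pperp * annihilator W = Pperp
  hθ : ∀ i, ∑ j, (annihilator W i j) ^ 2 * θ j = Pperp i i
  hθnn : ∀ i, 0 ≤ θ i
  hMdiag : ∀ i, 1 / 2 < annihilator W i i
  hδ : ∀ i, Pperp i i / (annihilator W i i) ^ 2 ≤ δ

/-- The diagonal-free matrix `A = P⊥ − M_W D_θ M_W`. -/
noncomputable def Amat {N KW : ℕ} (W : Matrix (Fin N) (Fin KW) ℝ)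
    (Pperp : Matrix (Fin N) (Fin N) ℝ) (θ : Fin N → ℝ) : Matrix (Fin N) (Fin N) ℝ :=
  Pperp - annihilator W * Matrix.diagonal θ * annihilator W

theorem aux_symm {N KW : ℕ} (W : Matrix (Fin N) (Fin KW) ℝ) : (annihilator W)ᵀ = annihilator W := by
  unfold annihilator
  simp [Matrix.transpose_mul, Matrix.transpose_nonsing_inv, Matrix.mul_assoc]

theorem aux_idem {N KW : ℕ} (W : Matrix (Fin N) (Fin KW) ℝ) :
    annihilator W * annihilator W = annihilator W := by
  unfold annihilator
  by_cases h : IsUnit (Wᵀ * W).det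
  · have h1 : W * (Wᵀ * W)⁻¹ * Wᵀ * (W * (Wᵀ * W)⁻¹ * Wᵀ) = W * (Wᵀ * W)⁻¹ * Wᵀ := by
      calc _ = W * ((Wᵀ * W)⁻¹ * (Wᵀ * W)) * (Wᵀ * W)⁻¹ * Wᵀ := by
            simp only [Matrix.mul_assoc]
        _ = _ := by rw [Matrix.nonsing_inv_mul _ h, Matrix.mul_one]
    rw [sub_mul, mul_sub, mul_sub, h1]; simp
  · rw [Matrix.nonsing_inv_apply_not_isUnit _ h]; simp

theorem aux_contr {N : ℕ} (M : Matrix (Fin N) (Fin N) ℝ) (hs : Mᵀ = M) (hi : M * M = M)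
    (v : Fin N → ℝ) : ∑ j, (M *ᵥ v) j ^ 2 ≤ ∑ j, v j ^ 2 := by
  have h1 : (M *ᵥ v) ⬝ᵥ (M *ᵥ v) = v ⬝ᵥ (M *ᵥ v) := by
    rw [Matrix.dotProduct_mulVec, ← Matrix.mulVec_transpose, hs, Matrix.mulVec_mulVec, hi,
      dotProduct_comm]
  have h2 : 0 ≤ ∑ j, (v j - (M *ᵥ v) j) ^ 2 := Finset.sum_nonneg fun j _ => sq_nonneg _
  have h3 : ∑ j, (v j - (M *ᵥ v) j) ^ 2
      = ∑ j, v j ^ 2 - 2 * (v ⬝ᵥ (M *ᵥ v)) + (M *ᵥ v) ⬝ᵥ (M *ᵥ v) := by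
    simp only [dotProduct, Finset.mul_sum, ← Finset.sum_sub_distrib, ← Finset.sum_add_distrib]
    exact Finset.sum_congr rfl fun j _ => by ring
  have h4 : ∑ j, (M *ᵥ v) j ^ 2 = (M *ᵥ v) ⬝ᵥ (M *ᵥ v) := by
    simp only [dotProduct]
    exact Finset.sum_congr rfl fun j _ => by ring
  linarith

theorem aux_row {N : ℕ} (P : Matrix (Fin N) (Fin N) ℝ) (hs : Pᵀ = P) (hi : P * P = P)
    (i : Fin N) : ∑ j, P i j ^ 2 = P i i := by
  have h : (P * P) i i = P i i := by rw [hi]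
  rw [Matrix.mul_apply] at h
  rw [← h]
  refine Finset.sum_congr rfl fun j _ => ?_
  have : P j i = P i j := congrFun (congrFun hs i) j
  rw [this]; ring

theorem aux_diag_le {N : ℕ} (P : Matrix (Fin N) (Fin N) ℝ) (hs : Pᵀ = P) (hi : P * P = P)
    (i : Fin N) : 0 ≤ P i i ∧ P i i ≤ 1 := by
  have h := aux_row P hs hi i
  have h0 : 0 ≤ ∑ j, P i j ^ 2 := Finset.sum_nonneg fun j _ => sq_nonneg _
  have h1 : P i i ^ 2 ≤ ∑ j, P i j ^ 2 :=
    Finset.single_le_sum (f := fun j => P i j ^ 2) (fun j _ => sq_nonneg _) (Finset.mem_univ i)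
  constructor
  · linarith
  · nlinarith

theorem aux_trace {N : ℕ} (P : Matrix (Fin N) (Fin N) ℝ) (hi : P * P = P) :
    ∑ i, P i i = (P.rank : ℝ) := by
  have hid : IsIdempotentElem (Matrix.toLin' P) := by
    unfold IsIdempotentElem
    rw [Module.End.mul_eq_comp, ← Matrix.toLin'_mul, hi]
  have h := (LinearMap.IsIdempotentElem.isProj_range _ hid).trace
  rw [Matrix.trace_toLin'_eq] at h
  rw [Matrix.rank_eq_finrank_range_toLin P (Pi.basisFun ℝ _) (Pi.basisFun ℝ _),
    Matrix.toLin_eq_toLin', ← h]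
  rfl

theorem aux_Arow {N KW KZ : ℕ} {W : Matrix (Fin N) (Fin KW) ℝ}
    {P : Matrix (Fin N) (Fin N) ℝ} {θ : Fin N → ℝ} {δ : ℝ} (hδ : δ < 1)
    (h : BalancedDesign KZ W P θ δ) (i : Fin N) :
    ∑ j, Amat W P θ i j ^ 2 ≤ 4 * P i i := by
  have hθ1 : ∀ k, θ k ≤ 1 := by
    intro k
    have hm := h.hMdiag k
    have hp : 0 < annihilator W k k ^ 2 := by positivity
    have h1 := h.hδ k
    rw [div_le_iff₀ hp, ← h.hθ k] at h1
    have h2 : annihilator W k k ^ 2 * θ k ≤ ∑ j, annihilator W k j ^ 2 * θ j :=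
      Finset.single_le_sum (f := fun j => annihilator W k j ^ 2 * θ j)
        (fun j _ => mul_nonneg (sq_nonneg _) (h.hθnn j)) (Finset.mem_univ k)
    have h3 : annihilator W k k ^ 2 * θ k ≤ annihilator W k k ^ 2 * δ := by linarith
    exact (le_of_mul_le_mul_left h3 hp).trans hδ.le
  have hs := aux_symm W
  have hsa : ∀ a b, annihilator W a b = annihilator W b a := fun a b =>
    (congrFun (congrFun hs b) a)
  have hB : ∀ j, (annihilator W * Matrix.diagonal θ * annihilator W) i j
      = (annihilator W *ᵥ fun k => annihilator W i k * θ k) j := by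
    intro j
    rw [Matrix.mul_apply]
    simp only [Matrix.mul_diagonal, Matrix.mulVec, dotProduct]
    refine Finset.sum_congr rfl fun k _ => ?_
    rw [hsa k j]; ring
  have hB2 : ∑ j, (annihilator W * Matrix.diagonal θ * annihilator W) i j ^ 2 ≤ P i i := by
    simp only [hB]
    refine (aux_contr _ hs (aux_idem W) _).trans ?_
    rw [← h.hθ i]
    refine Finset.sum_le_sum fun k _ => ?_
    rw [mul_pow]
    refine mul_le_mul_of_nonneg_left ?_ (sq_nonneg _)
    nlinarith [hθ1 k, h.hθnn k]
  have hP := aux_row P h.hPsymm h.hPidem i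
  calc ∑ j, Amat W P θ i j ^ 2
      ≤ ∑ j, (2 * P i j ^ 2
          + 2 * (annihilator W * Matrix.diagonal θ * annihilator W) i j ^ 2) := by
        refine Finset.sum_le_sum fun j _ => ?_
        simp only [Amat, Matrix.sub_apply]
        nlinarith [sq_nonneg (P i j + (annihilator W * Matrix.diagonal θ * annihilator W) i j)]
    _ ≤ 4 * P i i := by
        rw [Finset.sum_add_distrib, ← Finset.mul_sum, ← Finset.mul_sum]
        linarith

theorem aux_main {N KW KZ : ℕ} {W : Matrix (Fin N) (Fin KW) ℝ}
    {P : Matrix (Fin N) (Fin N) ℝ} {θ : Fin N → ℝ} {δ : ℝ} (hδ : δ < 1)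
    (h : BalancedDesign KZ W P θ δ) :
    ∑ i, ∑ j, ∑ k, (Amat W P θ i j) ^ 2 * (Amat W P θ i k) ^ 2 ≤ 16 * (KZ : ℝ) := by
  rw [← h.hPrank, ← aux_trace P h.hPidem, Finset.mul_sum]
  refine Finset.sum_le_sum fun i _ => ?_
  rw [← Finset.sum_mul_sum]
  have h1 := aux_Arow hδ h i
  have h0 : 0 ≤ ∑ j, Amat W P θ i j ^ 2 := Finset.sum_nonneg fun j _ => sq_nonneg _
  obtain ⟨h2, h3⟩ := aux_diag_le P h.hPsymm h.hPidem i
  nlinarith [mul_le_mul h1 h1 h0 (by linarith)]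

/-- Lemma 1(ii): Under the balanced-design assumption, there exists a constant
`C` depending only on `δ` such that `∑_{i,j,k} A_ij² A_ik² ≤ C K_Z`; consequently
`(1/K_Z²) ∑_{i,j,k} A_ij² A_ik² → 0` as `K_Z → ∞`. -/
theorem lemma1_part_ii (δ : ℝ) (hδ : δ < 1) :
    ∃ C : ℝ, 0 < C ∧
      (∀ (N KW KZ : ℕ) (W : Matrix (Fin N) (Fin KW) ℝ)
        (Pperp : Matrix (Fin N) (Fin N) ℝ) (θ : Fin N → ℝ),
        BalancedDesign KZ W Pperp θ δ →
        ∑ i, ∑ j, ∑ k, (Amat W Pperp θ i j) ^ 2 * (Amat W Pperp θ i k) ^ 2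
          ≤ C * (KZ : ℝ)) ∧
      (∀ (N KW KZ : ℕ → ℕ)
        (W : ∀ n, Matrix (Fin (N n)) (Fin (KW n)) ℝ)
        (Pperp : ∀ n, Matrix (Fin (N n)) (Fin (N n)) ℝ)
        (θ : ∀ n, Fin (N n) → ℝ),
        (∀ n, BalancedDesign (KZ n) (W n) (Pperp n) (θ n) δ) →
        Filter.Tendsto KZ Filter.atTop Filter.atTop →
        Filter.Tendsto
          (fun n => (1 / (KZ n : ℝ) ^ 2) *
            ∑ i, ∑ j, ∑ k,
              (Amat (W n) (Pperp n) (θ n) i j) ^ 2 * (Amat (W n) (Pperp n) (θ n) i k) ^ 2)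
          Filter.atTop (nhds 0)) := by
  refine ⟨16, by norm_num, fun N KW KZ W P θ h => aux_main hδ h, ?_⟩
  intro N KW KZ W P θ h hK
  have hlim : Filter.Tendsto (fun n => 16 * ((KZ n : ℝ))⁻¹) Filter.atTop (nhds 0) := by
    have := (tendsto_inv_atTop_zero.comp
      ((tendsto_natCast_atTop_atTop (R := ℝ)).comp hK)).const_mul (16 : ℝ)
    simpa using this
  refine squeeze_zero (fun n => ?_) (fun n => ?_) hlim
  · refine mul_nonneg (by positivity) ?_
    exact Finset.sum_nonneg fun i _ => Finset.sum_nonneg fun j _ => Finset.sum_nonneg fun k _ =>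
      mul_nonneg (sq_nonneg _) (sq_nonneg _)
  · refine (mul_le_mul_of_nonneg_left (aux_main hδ (h n)) (by positivity)).trans ?_
    rcases eq_or_ne (KZ n : ℝ) 0 with h0 | h0
    · simp [h0]
    · apply le_of_eq; field_simp
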